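/- Let H be a Hilbert space, ψ ∈ H a unit vector, and {A_x}_{x∈X} a finite family of positive operators on H with Σ_x A_x = I and Σ_x ⟨ψ, A_x² ψ⟩ > 1 − ε. Then, working with n×n matrices (finite-dimensional case), there exists a family of orthogonal projections {P_x}_{x∈X} with Σ_x P_x = I such that Σ_x ⟨ψ, (A_x − P_x)² ψ⟩ < 9ε. -/

import Mathlib

open Matrix ComplexOrder

/-!
Write each `A x` as a sum of rank-one operators `|w j⟩⟨w j|` with orthogonal `w j`, and label these
vectors by `x`. All of them together form a Parseval frame, so the weights `‖w j‖² ≤ 1` add up to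
the dimension `d`. Hence the set `S` of the `d` vectors with the largest `|⟨w j, ψ⟩|²` satisfies
`∑ j ∈ S, |⟨w j, ψ⟩|² ≥ ∑ j, ‖w j‖² |⟨w j, ψ⟩|² = ∑ x, ‖A x ψ‖² > 1 - ε`.

Löwdin's symmetric orthogonalization (a polar decomposition) yields an orthonormal basis `b` indexed
by `S` and a positive contraction `D` with `D (b j) = w j`; then
`‖ψ - D ψ‖² ≤ ‖ψ‖² - ‖D ψ‖² = 1 - ∑ j ∈ S, |⟨w j, ψ⟩|² < ε`. Let `P x` be the projection onto the
span of the `b j` labelled `x`. Comparing both `P x ψ` and `A x ψ` with `D (P x ψ)` costs `3ε` for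
replacing `w j` by `b j`, `3ε` for the norms `‖w j‖ < 1` with `j ∈ S`, and `3ε` for the vectors
discarded outside `S`.
-/

open InnerProductSpace Module
open scoped Finset InnerProductSpace

section Selection

variable {J : Type*} [Fintype J]

lemma exists_card_eq_threshold (c : J → ℝ) {n : ℕ} (hn : n ≤ Fintype.card J) :
    ∃ (S : Finset J) (t : ℝ), #S = n ∧ (∀ i ∈ S, t ≤ c i) ∧ ∀ j ∉ S, c j ≤ t := by
  classical
  obtain ⟨S, hS, hmax⟩ := (Finset.univ.powersetCard n).exists_max_image (fun S ↦ ∑ j ∈ S, c j)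
    (Finset.powersetCard_nonempty.2 hn)
  have hcard : #S = n := (Finset.mem_powersetCard.1 hS).2
  have swap_le {i j : J} (hi : i ∈ S) (hj : j ∉ S) : c j ≤ c i := by
    have hj' : j ∉ S.erase i := fun h ↦ hj (Finset.mem_of_mem_erase h)
    have hswap := hmax (insert j (S.erase i)) <| Finset.mem_powersetCard.2
      ⟨Finset.subset_univ _, by
        rw [Finset.card_insert_of_notMem hj', Finset.card_erase_add_one hi, hcard]⟩
    rw [Finset.sum_insert hj', ← Finset.add_sum_erase S c hi] at hswap
    exact le_of_add_le_add_right hswap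
  rcases S.eq_empty_or_nonempty with rfl | hne
  · exact ⟨∅, ∑ j, |c j|, hcard, by simp, fun j _ ↦ (le_abs_self _).trans <|
      Finset.single_le_sum (f := fun j ↦ |c j|) (fun _ _ ↦ abs_nonneg _) (Finset.mem_univ j)⟩
  · obtain ⟨i, hi, hmin⟩ := S.exists_min_image c hne
    exact ⟨S, c i, hcard, hmin, fun j hj ↦ swap_le hi hj⟩

lemma exists_card_eq_sum_mul_le_sum {n : ℕ} {a : J → ℝ} (ha₀ : ∀ j, 0 ≤ a j) (ha₁ : ∀ j, a j ≤ 1)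
    (hsum : ∑ j, a j = n) (c : J → ℝ) : ∃ S : Finset J, #S = n ∧ ∑ j, a j * c j ≤ ∑ j ∈ S, c j := by
  classical
  have hn : n ≤ Fintype.card J := by
    have : (n : ℝ) ≤ Fintype.card J := by
      simpa [hsum] using Finset.sum_le_sum fun j (_ : j ∈ Finset.univ) ↦ ha₁ j
    exact_mod_cast this
  obtain ⟨S, t, hcard, hS, hSc⟩ := exists_card_eq_threshold c hn
  have hshift : ∑ j, a j * (c j - t) ≤ ∑ j ∈ S, (c j - t) := by
    rw [← Finset.sum_add_sum_compl S, ← add_zero (∑ j ∈ S, (c j - t))]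
    refine add_le_add (Finset.sum_le_sum fun j hj ↦ ?_) (Finset.sum_nonpos fun j hj ↦ ?_)
    · exact mul_le_of_le_one_left (sub_nonneg.2 (hS j hj)) (ha₁ j)
    · exact mul_nonpos_of_nonneg_of_nonpos (ha₀ j)
        (sub_nonpos.2 (hSc j (Finset.mem_compl.1 hj)))
  refine ⟨S, hcard, ?_⟩
  simpa [mul_sub, ← Finset.sum_mul, hsum, hcard] using hshift

end Selection

section InnerProductSpace

variable {𝕜 E : Type*} [RCLike 𝕜] [NormedAddCommGroup E] [InnerProductSpace 𝕜 E]

section NormSq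

lemma norm_add_sq_le_three_halves {F : Type*} [SeminormedAddGroup F] (v w : F) :
    ‖v + w‖ ^ 2 ≤ 3 / 2 * ‖v‖ ^ 2 + 3 * ‖w‖ ^ 2 := by
  have h := pow_le_pow_left₀ (norm_nonneg _) (norm_add_le v w) 2
  linarith [sq_nonneg (‖v‖ - 2 * ‖w‖), add_sq ‖v‖ ‖w‖, sub_sq ‖v‖ (2 * ‖w‖), mul_pow 2 ‖w‖ 2]

lemma norm_sq_sum_of_pairwise_orthogonal {ι : Type*} {s : Finset ι} {v : ι → E}
    (hv : (s : Set ι).Pairwise fun i j ↦ ⟪v i, v j⟫_𝕜 = 0) :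
    ‖∑ i ∈ s, v i‖ ^ 2 = ∑ i ∈ s, ‖v i‖ ^ 2 := by
  rw [← inner_self_eq_norm_sq (𝕜 := 𝕜), sum_inner, map_sum]
  refine Finset.sum_congr rfl fun i hi ↦ ?_
  rw [inner_sum, Finset.sum_eq_single_of_mem i hi fun j hj hji ↦ hv hi hj hji.symm,
    inner_self_eq_norm_sq]

lemma sum_norm_sq_sum_fiber {J X : Type*} [Fintype J] [Fintype X] [DecidableEq X] {f : J → X}
    {w : J → E} (hw : Pairwise fun i j ↦ f i = f j → ⟪w i, w j⟫_𝕜 = 0) (c : J → 𝕜) :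
    ∑ x, ‖∑ j with f j = x, c j • w j‖ ^ 2 = ∑ j, ‖c j‖ ^ 2 * ‖w j‖ ^ 2 := by
  rw [← Finset.sum_fiberwise Finset.univ f]
  refine Finset.sum_congr rfl fun x _ ↦ ?_
  rw [norm_sq_sum_of_pairwise_orthogonal (𝕜 := 𝕜)]
  · simp only [norm_smul, mul_pow]
  · intro i hi j hj hij
    have hfij : f i = f j := by simp_all
    rw [inner_smul_left, inner_smul_right, hw hij hfij, mul_zero, mul_zero]

end NormSq

section Positive

lemma sum_rankOne_sqrt_smul_apply {ι : Type*} [Fintype ι] (e : OrthonormalBasis ι 𝕜 E) {a : ι → ℝ}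
    (ha : ∀ i, 0 ≤ a i) (j : ι) :
    (∑ i, rankOne 𝕜 ((√(a i) : 𝕜) • e i) ((√(a i) : 𝕜) • e i)) (e j) = (a j : 𝕜) • e j := by
  classical
  have hsq : (√(a j) : 𝕜) * √(a j) = a j := by
    rw [← RCLike.ofReal_mul, Real.mul_self_sqrt (ha j)]
  simp [e.inner_eq_ite, smul_smul, hsq]

variable [FiniteDimensional 𝕜 E]

lemma exists_pairwise_orthogonal_eq_sum_rankOne {T : E →L[𝕜] E} (hT : T.IsPositive) :
    ∃ w : Fin (finrank 𝕜 E) → E, (Pairwise fun i j ↦ ⟪w i, w j⟫_𝕜 = 0) ∧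
      T = ∑ i, rankOne 𝕜 (w i) (w i) := by
  let e := hT.isSymmetric.eigenvectorBasis rfl
  refine ⟨fun i ↦ (√(hT.isSymmetric.eigenvalues rfl i) : 𝕜) • e i, fun i j hij ↦ ?_, ?_⟩
  · simp only [inner_smul_left, inner_smul_right, e.orthonormal.2 hij, mul_zero]
  · refine ContinuousLinearMap.coe_injective <| e.toBasis.ext fun j ↦ ?_
    have hj := hT.isSymmetric.apply_eigenvectorBasis rfl j
    rw [e.coe_toBasis]
    exact hj.trans
      (sum_rankOne_sqrt_smul_apply e (hT.toLinearMap.nonneg_eigenvalues rfl) j).symm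

lemma exists_isPositive_mul_self_eq {T : E →L[𝕜] E} (hT : T.IsPositive) :
    ∃ D : E →L[𝕜] E, D.IsPositive ∧ D * D = T := by
  let e := hT.isSymmetric.eigenvectorBasis rfl
  let a := hT.isSymmetric.eigenvalues rfl
  have ha₀ : ∀ i, 0 ≤ a i := hT.toLinearMap.nonneg_eigenvalues rfl
  refine ⟨∑ i, rankOne 𝕜 ((√√(a i) : 𝕜) • e i) ((√√(a i) : 𝕜) • e i),
    ContinuousLinearMap.isPositive_sum _ fun i _ ↦ isPositive_rankOne_self _, ?_⟩
  refine ContinuousLinearMap.coe_injective <| e.toBasis.ext fun j ↦ ?_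
  have hD := sum_rankOne_sqrt_smul_apply e (fun i ↦ Real.sqrt_nonneg (a i)) j
  have hsq : (√(a j) : 𝕜) * √(a j) = a j := by
    rw [← RCLike.ofReal_mul, Real.mul_self_sqrt (ha₀ j)]
  have hj : T (e j) = (a j : 𝕜) • e j := hT.isSymmetric.apply_eigenvectorBasis rfl j
  rw [e.coe_toBasis, ContinuousLinearMap.coe_coe, ContinuousLinearMap.coe_coe,
    mul_apply_eq_comp, hD, map_smul, hD, smul_smul, hsq, hj]

lemma norm_sub_apply_sq_le {D : E →L[𝕜] E} (hD : D.IsPositive) (hD₁ : ∀ v, ‖D v‖ ≤ ‖v‖) (v : E) :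
    ‖v - D v‖ ^ 2 ≤ ‖v‖ ^ 2 - ‖D v‖ ^ 2 := by
  obtain ⟨C, hC, rfl⟩ := exists_isPositive_mul_self_eq hD
  have hCC (u : E) : RCLike.re ⟪u, (C * C) u⟫_𝕜 = ‖C u‖ ^ 2 := by
    rw [mul_apply_eq_comp, ← hC.inner_left_eq_inner_right,
      inner_self_eq_norm_sq]
  have hle : ‖(C * C) v‖ ^ 2 ≤ RCLike.re ⟪v, (C * C) v⟫_𝕜 := by
    calc ‖(C * C) v‖ ^ 2 = RCLike.re ⟪C v, (C * C) (C v)⟫_𝕜 := (hCC (C v)).symm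
      _ ≤ ‖C v‖ * ‖(C * C) (C v)‖ := re_inner_le_norm _ _
      _ ≤ ‖C v‖ * ‖C v‖ := by gcongr; exact hD₁ _
      _ = RCLike.re ⟪v, (C * C) v⟫_𝕜 := by rw [hCC, sq]
  rw [@norm_sub_sq 𝕜]
  linarith

end Positive

section Polar

variable [FiniteDimensional 𝕜 E]

lemma exists_linearIsometryEquiv_apply_eq {S T : E →L[𝕜] E} (h : ∀ v, ‖S v‖ = ‖T v‖) :
    ∃ U : E ≃ₗᵢ[𝕜] E, ∀ v, U (S v) = T v := by
  obtain ⟨g, hg⟩ := S.toLinearMap.rangeRestrict.exists_rightInverse_of_surjective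
    S.toLinearMap.range_rangeRestrict
  have hSg (s : S.toLinearMap.range) : S (g s) = s :=
    congrArg Subtype.val (LinearMap.congr_fun hg s)
  let L : S.toLinearMap.range →ₗᵢ[𝕜] E :=
    { toLinearMap := T.toLinearMap ∘ₗ g
      norm_map' := fun s ↦ by
        rw [LinearMap.comp_apply, ContinuousLinearMap.coe_coe, ← h, hSg, Submodule.coe_norm] }
  refine ⟨L.extend.toLinearIsometryEquiv rfl, fun v ↦ ?_⟩
  have hL := L.extend_apply ⟨S v, v, rfl⟩
  refine hL.trans <| sub_eq_zero.1 <| norm_eq_zero.1 ?_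
  change ‖T (g ⟨S v, v, rfl⟩) - T v‖ = 0
  rw [← map_sub, ← h, map_sub, hSg, sub_self, norm_zero]

lemma exists_polar_decomposition (T : E →L[𝕜] E) :
    ∃ (U : E ≃ₗᵢ[𝕜] E) (D : E →L[𝕜] E), D.IsPositive ∧ ∀ v, U (D v) = T v := by
  have := FiniteDimensional.complete 𝕜 E
  obtain ⟨D, hD, hDD⟩ := exists_isPositive_mul_self_eq T.isPositive_adjoint_comp_self
  have hnorm (v : E) : ‖D v‖ = ‖T v‖ := by
    rw [← sq_eq_sq₀ (norm_nonneg _) (norm_nonneg _), T.apply_norm_sq_eq_inner_adjoint_left, ← hDD,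
      mul_apply_eq_comp, hD.inner_left_eq_inner_right, inner_self_eq_norm_sq]
  obtain ⟨U, hU⟩ := exists_linearIsometryEquiv_apply_eq hnorm
  exact ⟨U, D, hD, hU⟩

lemma exists_orthonormalBasis_isPositive_apply_eq {ι : Type*} [Fintype ι]
    (hι : Fintype.card ι = finrank 𝕜 E) (w : ι → E) :
    ∃ (b : OrthonormalBasis ι 𝕜 E) (D : E →L[𝕜] E), D.IsPositive ∧ ∀ i, D (b i) = w i := by
  let e : OrthonormalBasis ι 𝕜 E :=
    (stdOrthonormalBasis 𝕜 E).reindex (Fintype.equivFinOfCardEq hι).symm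
  obtain ⟨U, D, hD, hUD⟩ := exists_polar_decomposition (∑ i, rankOne 𝕜 (e i) (w i))
  refine ⟨e.map U.symm, D, hD, fun i ↦ ext_inner_right 𝕜 fun v ↦ ?_⟩
  calc ⟪D (e.map U.symm i), v⟫_𝕜 = ⟪U.symm (e i), D v⟫_𝕜 := hD.inner_left_eq_inner_right _ _
    _ = ⟪e i, U (D v)⟫_𝕜 := by rw [← U.inner_map_map, U.apply_symm_apply]
    _ = ⟪w i, v⟫_𝕜 := by
      classical
      simp [hUD, inner_sum, inner_smul_right, e.inner_eq_ite]

end Polar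

variable (𝕜) in
/-- A finite family is a Parseval frame if the rank-one operators it defines add up to the
identity. Orthonormal bases padded by zero vectors are exactly the pairwise orthogonal ones. -/
def IsParsevalFrame {J : Type*} [Fintype J] (w : J → E) : Prop :=
  ∑ j, rankOne 𝕜 (w j) (w j) = 1

namespace IsParsevalFrame

variable {J : Type*} [Fintype J] {w : J → E}

lemma sum_inner_smul (hw : IsParsevalFrame 𝕜 w) (v : E) : ∑ j, ⟪w j, v⟫_𝕜 • w j = v := by
  simpa using DFunLike.congr_fun hw v

lemma sum_norm_sq_inner (hw : IsParsevalFrame 𝕜 w) (v : E) : ∑ j, ‖⟪w j, v⟫_𝕜‖ ^ 2 = ‖v‖ ^ 2 := by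
  calc ∑ j, ‖⟪w j, v⟫_𝕜‖ ^ 2 = ∑ j, RCLike.re ⟪v, ⟪w j, v⟫_𝕜 • w j⟫_𝕜 := by
        simp only [inner_smul_right, inner_mul_symm_re_eq_norm, norm_mul, norm_inner_symm v, sq]
    _ = ‖v‖ ^ 2 := by rw [← map_sum, ← inner_sum, hw.sum_inner_smul, inner_self_eq_norm_sq]

lemma norm_sq_le_one (hw : IsParsevalFrame 𝕜 w) (j : J) : ‖w j‖ ^ 2 ≤ 1 := by
  have hle : ‖⟪w j, w j⟫_𝕜‖ ^ 2 ≤ ‖w j‖ ^ 2 := by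
    rw [← hw.sum_norm_sq_inner (w j)]
    exact Finset.single_le_sum (f := fun i ↦ ‖⟪w i, w j⟫_𝕜‖ ^ 2) (fun _ _ ↦ sq_nonneg _)
      (Finset.mem_univ j)
  rw [inner_self_eq_norm_sq_to_K, norm_pow, RCLike.norm_ofReal, abs_norm] at hle
  nlinarith [sq_nonneg ‖w j‖]

lemma sum_norm_sq [FiniteDimensional 𝕜 E] (hw : IsParsevalFrame 𝕜 w) :
    ∑ j, ‖w j‖ ^ 2 = finrank 𝕜 E := by
  let e := stdOrthonormalBasis 𝕜 E
  calc ∑ j, ‖w j‖ ^ 2 = ∑ j, ∑ i, ‖⟪w j, e i⟫_𝕜‖ ^ 2 := by simp only [e.sum_sq_norm_inner_left]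
    _ = ∑ i, ‖e i‖ ^ 2 := by rw [Finset.sum_comm]; simp only [hw.sum_norm_sq_inner]
    _ = finrank 𝕜 E := by simp

lemma exists_card_eq_finrank_sum_le [FiniteDimensional 𝕜 E] (hw : IsParsevalFrame 𝕜 w) (v : E) :
    ∃ S : Finset J, #S = finrank 𝕜 E ∧
      ∑ j, ‖w j‖ ^ 2 * ‖⟪w j, v⟫_𝕜‖ ^ 2 ≤ ∑ j ∈ S, ‖⟪w j, v⟫_𝕜‖ ^ 2 :=
  exists_card_eq_sum_mul_le_sum (fun _ ↦ sq_nonneg _) hw.norm_sq_le_one hw.sum_norm_sq _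

lemma inner_self_smul_self (hw : IsParsevalFrame 𝕜 w)
    (horth : Pairwise fun i j ↦ ⟪w i, w j⟫_𝕜 = 0) (j : J) : ⟪w j, w j⟫_𝕜 • w j = w j := by
  nth_rw 4 [← hw.sum_inner_smul (w j)]
  exact (Fintype.sum_eq_single (f := fun i ↦ ⟪w i, w j⟫_𝕜 • w i) j
    fun i hij ↦ by rw [horth hij, zero_smul]).symm

lemma norm_sq_inner_mul_norm_sq (hw : IsParsevalFrame 𝕜 w)
    (horth : Pairwise fun i j ↦ ⟪w i, w j⟫_𝕜 = 0) (v : E) (j : J) :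
    ‖⟪w j, v⟫_𝕜‖ ^ 2 * ‖w j‖ ^ 2 = ‖⟪w j, v⟫_𝕜‖ ^ 2 := by
  have hnorm : ‖w j‖ ^ 2 * ‖⟪w j, v⟫_𝕜‖ = ‖⟪w j, v⟫_𝕜‖ := by
    conv_rhs => rw [← hw.inner_self_smul_self horth j, inner_smul_left, norm_mul, RCLike.norm_conj,
      inner_self_eq_norm_sq_to_K, norm_pow, RCLike.norm_ofReal, abs_norm]
  rw [mul_comm, sq ‖⟪w j, v⟫_𝕜‖, ← mul_assoc, hnorm]

end IsParsevalFrame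

lemma isParsevalFrame_extend {ι J : Type*} [Fintype ι] [Fintype J] (b : OrthonormalBasis ι 𝕜 E)
    {g : ι → J} (hg : g.Injective) : IsParsevalFrame 𝕜 (Function.extend g b 0) := by
  refine Eq.trans (Fintype.sum_of_injective g hg _ _ (fun j hj ↦ ?_) fun i ↦ ?_).symm
    b.sum_rankOne_eq_id
  · rw [Function.extend_apply' _ _ _ hj, Pi.zero_apply, map_zero]
  · rw [hg.extend_apply]

lemma pairwise_orthogonal_extend {ι J : Type*} {b : ι → E}
    (hb : Pairwise fun i j ↦ ⟪b i, b j⟫_𝕜 = 0) {g : ι → J} (hg : g.Injective) :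
    Pairwise fun i j ↦ ⟪Function.extend g b 0 i, Function.extend g b 0 j⟫_𝕜 = 0 := by
  intro i j hij
  by_cases hi : ∃ k, g k = i
  · by_cases hj : ∃ k, g k = j
    · obtain ⟨⟨k, rfl⟩, l, rfl⟩ := And.intro hi hj
      rw [hg.extend_apply, hg.extend_apply, hb fun h ↦ hij (congrArg g h)]
    · rw [Function.extend_apply' _ _ _ hj, Pi.zero_apply, inner_zero_right]
  · rw [Function.extend_apply' _ _ _ hi, Pi.zero_apply, inner_zero_left]

lemma exists_isParsevalFrame_isPositive_apply_eq [FiniteDimensional 𝕜 E] {J : Type*} [Fintype J]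
    {S : Finset J} (hS : #S = finrank 𝕜 E) (w : J → E) :
    ∃ (b : J → E) (D : E →L[𝕜] E), IsParsevalFrame 𝕜 b ∧ (Pairwise fun i j ↦ ⟪b i, b j⟫_𝕜 = 0) ∧
      D.IsPositive ∧ (∀ j ∈ S, D (b j) = w j) ∧ ∀ j ∉ S, b j = 0 := by
  obtain ⟨b, D, hD, hDb⟩ := exists_orthonormalBasis_isPositive_apply_eq (𝕜 := 𝕜)
    ((Fintype.card_coe S).trans hS) fun j ↦ w j
  refine ⟨Function.extend Subtype.val b 0, D, isParsevalFrame_extend b Subtype.val_injective,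
    pairwise_orthogonal_extend b.orthonormal.2 Subtype.val_injective, hD, fun j hj ↦ ?_,
    fun j hj ↦ ?_⟩
  · rw [← hDb ⟨j, hj⟩]
    exact congrArg D (Subtype.val_injective.extend_apply _ _ (⟨j, hj⟩ : S))
  · exact Function.extend_apply' _ _ _ fun ⟨i, hi⟩ ↦ hj (hi ▸ i.2)

section FiberFrameOperator

variable {J X : Type*} [Fintype J] [DecidableEq X]

variable (𝕜) in
/-- The frame operator of the subfamily of `w` labelled `x` by `f`. When `w` is a Parseval frame,
these operators form the POVM with outcome `x` obtained from `w` by coarse-graining along `f`. -/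
noncomputable def fiberFrameOperator (f : J → X) (w : J → E) (x : X) : E →L[𝕜] E :=
  ∑ j with f j = x, rankOne 𝕜 (w j) (w j)

variable {f : J → X} {w b : J → E}

lemma fiberFrameOperator_apply (x : X) (v : E) :
    fiberFrameOperator 𝕜 f w x v = ∑ j with f j = x, ⟪w j, v⟫_𝕜 • w j := by
  simp [fiberFrameOperator]

lemma isStarProjection_fiberFrameOperator [CompleteSpace E] (hb : IsParsevalFrame 𝕜 b)
    (horth : Pairwise fun i j ↦ ⟪b i, b j⟫_𝕜 = 0) (x : X) :
    IsStarProjection (fiberFrameOperator 𝕜 f b x) where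
  isIdempotentElem := by
    ext v
    rw [mul_apply_eq_comp, fiberFrameOperator_apply, fiberFrameOperator_apply]
    refine Finset.sum_congr rfl fun j hj ↦ ?_
    rw [inner_sum, Finset.sum_eq_single_of_mem j hj fun i _ hij ↦ by
      rw [inner_smul_right, horth hij.symm, mul_zero], inner_smul_right, mul_smul,
      hb.inner_self_smul_self horth]
  isSelfAdjoint :=
    (ContinuousLinearMap.isPositive_sum _ fun _ _ ↦ isPositive_rankOne_self _).isSelfAdjoint

variable [Fintype X]

lemma sum_fiberFrameOperator_eq_one_iff :
    ∑ x, fiberFrameOperator 𝕜 f w x = 1 ↔ IsParsevalFrame 𝕜 w :=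
  by rw [IsParsevalFrame, ← Finset.sum_fiberwise Finset.univ f]; rfl

lemma sum_norm_sq_fiberFrameOperator_apply
    (hw : Pairwise fun i j ↦ f i = f j → ⟪w i, w j⟫_𝕜 = 0) (v : E) :
    ∑ x, ‖fiberFrameOperator 𝕜 f w x v‖ ^ 2 = ∑ j, ‖⟪w j, v⟫_𝕜‖ ^ 2 * ‖w j‖ ^ 2 := by
  simp only [fiberFrameOperator_apply, sum_norm_sq_sum_fiber hw]

lemma sum_norm_sq_sub_apply_fiberFrameOperator_le [FiniteDimensional 𝕜 E] {D : E →L[𝕜] E}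
    (hD : D.IsPositive) (hD₁ : ∀ v, ‖D v‖ ≤ ‖v‖) (hb : IsParsevalFrame 𝕜 b)
    (horth : Pairwise fun i j ↦ ⟪b i, b j⟫_𝕜 = 0)
    (hDb : Pairwise fun i j ↦ f i = f j → ⟪D (b i), D (b j)⟫_𝕜 = 0) (v : E) :
    ∑ x, ‖fiberFrameOperator 𝕜 f b x v - D (fiberFrameOperator 𝕜 f b x v)‖ ^ 2 ≤
      ∑ j, (1 - ‖D (b j)‖ ^ 2) * ‖⟪b j, v⟫_𝕜‖ ^ 2 := by
  have hP : ∑ x, ‖fiberFrameOperator 𝕜 f b x v‖ ^ 2 = ∑ j, ‖⟪b j, v⟫_𝕜‖ ^ 2 := by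
    simp only [sum_norm_sq_fiberFrameOperator_apply fun _ _ hij _ ↦ horth hij,
      hb.norm_sq_inner_mul_norm_sq horth]
  have hDP : ∑ x, ‖D (fiberFrameOperator 𝕜 f b x v)‖ ^ 2 =
      ∑ j, ‖⟪b j, v⟫_𝕜‖ ^ 2 * ‖D (b j)‖ ^ 2 := by
    simp only [fiberFrameOperator_apply, map_sum, map_smul, sum_norm_sq_sum_fiber hDb]
  calc ∑ x, ‖fiberFrameOperator 𝕜 f b x v - D (fiberFrameOperator 𝕜 f b x v)‖ ^ 2
      ≤ ∑ x, (‖fiberFrameOperator 𝕜 f b x v‖ ^ 2 - ‖D (fiberFrameOperator 𝕜 f b x v)‖ ^ 2) :=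
        Finset.sum_le_sum fun x _ ↦ norm_sub_apply_sq_le hD hD₁ _
    _ = ∑ j, (1 - ‖D (b j)‖ ^ 2) * ‖⟪b j, v⟫_𝕜‖ ^ 2 := by
        rw [Finset.sum_sub_distrib, hP, hDP, ← Finset.sum_sub_distrib]
        exact Finset.sum_congr rfl fun j _ ↦ by ring

lemma sum_norm_sq_apply_fiberFrameOperator_sub {D : E →L[𝕜] E}
    (hw : Pairwise fun i j ↦ f i = f j → ⟪w i, w j⟫_𝕜 = 0)
    (hDb : ∀ j, D (b j) = w j ∨ b j = 0) (v : E) :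
    ∑ x, ‖D (fiberFrameOperator 𝕜 f b x v) - fiberFrameOperator 𝕜 f w x v‖ ^ 2 =
      ∑ j, ‖⟪b j - w j, v⟫_𝕜‖ ^ 2 * ‖w j‖ ^ 2 := by
  rw [← sum_norm_sq_sum_fiber hw]
  refine Finset.sum_congr rfl fun x _ ↦ ?_
  simp only [fiberFrameOperator_apply, map_sum, map_smul, ← Finset.sum_sub_distrib]
  congr! 3 with j
  rcases hDb j with hj | hj <;> simp [hj, inner_sub_left, sub_smul]

end FiberFrameOperator

section Orthogonalization

variable {J X : Type*} [Fintype J] {S : Finset J} {w b : J → E} {D : E →L[𝕜] E}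

lemma norm_sq_apply_eq_sum (hb : IsParsevalFrame 𝕜 b) (hD : D.IsPositive)
    (hDb : ∀ j ∈ S, D (b j) = w j) (hbS : ∀ j ∉ S, b j = 0) (v : E) :
    ‖D v‖ ^ 2 = ∑ j ∈ S, ‖⟪w j, v⟫_𝕜‖ ^ 2 := by
  rw [← hb.sum_norm_sq_inner (D v),
    ← Finset.sum_subset S.subset_univ fun j _ hj ↦ by simp [hbS j hj]]
  exact Finset.sum_congr rfl fun j hj ↦ by rw [← hD.inner_left_eq_inner_right, hDb j hj]

lemma norm_apply_le_of_isParsevalFrame (hw : IsParsevalFrame 𝕜 w) (hb : IsParsevalFrame 𝕜 b)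
    (hD : D.IsPositive) (hDb : ∀ j ∈ S, D (b j) = w j) (hbS : ∀ j ∉ S, b j = 0) (v : E) :
    ‖D v‖ ≤ ‖v‖ := by
  rw [← sq_le_sq₀ (norm_nonneg _) (norm_nonneg _), norm_sq_apply_eq_sum hb hD hDb hbS,
    ← hw.sum_norm_sq_inner]
  exact Finset.sum_le_univ_sum_of_nonneg fun j ↦ sq_nonneg _

lemma norm_sq_sub_apply_eq_sum (hb : IsParsevalFrame 𝕜 b) (hD : D.IsPositive)
    (hDb : ∀ j ∈ S, D (b j) = w j) (hbS : ∀ j ∉ S, b j = 0) (v : E) :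
    ‖v - D v‖ ^ 2 = ∑ j ∈ S, ‖⟪b j - w j, v⟫_𝕜‖ ^ 2 := by
  rw [← hb.sum_norm_sq_inner (v - D v),
    ← Finset.sum_subset S.subset_univ fun j _ hj ↦ by simp [hbS j hj]]
  exact Finset.sum_congr rfl fun j hj ↦ by
    rw [inner_sub_right, ← hD.inner_left_eq_inner_right, hDb j hj, ← inner_sub_left]

lemma one_sub_mul_norm_sq_add_le {F : Type*} [SeminormedAddCommGroup F] {a : ℝ} (ha : a ≤ 1)
    (u c : F) : 3 / 2 * ((1 - a) * ‖u‖ ^ 2) + 3 * (‖u - c‖ ^ 2 * a) ≤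
      3 * ‖u - c‖ ^ 2 + 3 * ((1 - a) * ‖c‖ ^ 2) := by
  have hu : ‖u‖ ^ 2 ≤ 2 * ‖u - c‖ ^ 2 + 2 * ‖c‖ ^ 2 := by
    have h := pow_le_pow_left₀ (norm_nonneg _) (norm_le_norm_sub_add u c) 2
    linarith [sq_nonneg (‖u - c‖ - ‖c‖), add_sq ‖u - c‖ ‖c‖, sub_sq ‖u - c‖ ‖c‖]
  linarith [mul_le_mul_of_nonneg_left hu (sub_nonneg.2 ha)]

variable [FiniteDimensional 𝕜 E] [Fintype X] [DecidableEq X] {f : J → X}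

lemma sum_norm_sq_fiberFrameOperator_sub_apply_le [DecidableEq J] (hw : IsParsevalFrame 𝕜 w)
    (hwf : Pairwise fun i j ↦ f i = f j → ⟪w i, w j⟫_𝕜 = 0) (hb : IsParsevalFrame 𝕜 b)
    (horth : Pairwise fun i j ↦ ⟪b i, b j⟫_𝕜 = 0) (hD : D.IsPositive)
    (hDb : ∀ j ∈ S, D (b j) = w j) (hbS : ∀ j ∉ S, b j = 0) (v : E) :
    ∑ x, ‖(fiberFrameOperator 𝕜 f w x - fiberFrameOperator 𝕜 f b x) v‖ ^ 2 ≤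
      ∑ j ∈ S, (3 * ‖⟪b j - w j, v⟫_𝕜‖ ^ 2 + 3 * ((1 - ‖w j‖ ^ 2) * ‖⟪w j, v⟫_𝕜‖ ^ 2)) +
        ∑ j ∈ Sᶜ, 3 * (‖w j‖ ^ 2 * ‖⟪w j, v⟫_𝕜‖ ^ 2) := by
  have hD₁ := norm_apply_le_of_isParsevalFrame hw hb hD hDb hbS
  have hDb' (j : J) : D (b j) = w j ∨ b j = 0 := (em (j ∈ S)).imp (hDb j) (hbS j)
  have hDbf : Pairwise fun i j ↦ f i = f j → ⟪D (b i), D (b j)⟫_𝕜 = 0 := fun i j hij hf ↦ by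
    rcases hDb' i with hi | hi
    · rcases hDb' j with hj | hj
      · rw [hi, hj, hwf hij hf]
      · rw [hj, map_zero, inner_zero_right]
    · rw [hi, map_zero, inner_zero_left]
  calc ∑ x, ‖(fiberFrameOperator 𝕜 f w x - fiberFrameOperator 𝕜 f b x) v‖ ^ 2
      ≤ ∑ x, (3 / 2 * ‖fiberFrameOperator 𝕜 f b x v - D (fiberFrameOperator 𝕜 f b x v)‖ ^ 2 +
          3 * ‖D (fiberFrameOperator 𝕜 f b x v) - fiberFrameOperator 𝕜 f w x v‖ ^ 2) := by
        refine Finset.sum_le_sum fun x _ ↦ ?_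
        rw [_root_.sub_apply, norm_sub_rev,
          ← sub_add_sub_cancel _ (D (fiberFrameOperator 𝕜 f b x v))]
        exact norm_add_sq_le_three_halves _ _
    _ ≤ ∑ j, (3 / 2 * ((1 - ‖D (b j)‖ ^ 2) * ‖⟪b j, v⟫_𝕜‖ ^ 2) +
          3 * (‖⟪b j - w j, v⟫_𝕜‖ ^ 2 * ‖w j‖ ^ 2)) := by
        simp only [Finset.sum_add_distrib, ← Finset.mul_sum]
        rw [sum_norm_sq_apply_fiberFrameOperator_sub hwf hDb']
        gcongr
        exact sum_norm_sq_sub_apply_fiberFrameOperator_le hD hD₁ hb horth hDbf v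
    _ ≤ _ := by
        rw [← Finset.sum_add_sum_compl S]
        refine add_le_add (Finset.sum_le_sum fun j hj ↦ ?_) (Finset.sum_le_sum fun j hj ↦ ?_)
        · rw [hDb j hj, inner_sub_left]
          exact one_sub_mul_norm_sq_add_le (hw.norm_sq_le_one j) _ _
        · simp [hbS j (Finset.mem_compl.1 hj), mul_comm]

lemma IsParsevalFrame.exists_sum_norm_sq_fiberFrameOperator_sub_le (hw : IsParsevalFrame 𝕜 w)
    (hwf : Pairwise fun i j ↦ f i = f j → ⟪w i, w j⟫_𝕜 = 0) (v : E) :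
    ∃ b : J → E, IsParsevalFrame 𝕜 b ∧ (Pairwise fun i j ↦ ⟪b i, b j⟫_𝕜 = 0) ∧
      ∑ x, ‖(fiberFrameOperator 𝕜 f w x - fiberFrameOperator 𝕜 f b x) v‖ ^ 2 ≤
        9 * (‖v‖ ^ 2 - ∑ x, ‖fiberFrameOperator 𝕜 f w x v‖ ^ 2) := by
  classical
  obtain ⟨S, hcard, hS⟩ := hw.exists_card_eq_finrank_sum_le v
  obtain ⟨b, D, hb, horth, hD, hDb, hbS⟩ := exists_isParsevalFrame_isPositive_apply_eq hcard w
  have hA : ∑ x, ‖fiberFrameOperator 𝕜 f w x v‖ ^ 2 = ∑ j, ‖w j‖ ^ 2 * ‖⟪w j, v⟫_𝕜‖ ^ 2 := by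
    simp only [sum_norm_sq_fiberFrameOperator_apply hwf, mul_comm]
  have hle := sum_norm_sq_fiberFrameOperator_sub_apply_le hw hwf hb horth hD hDb hbS v
  have hloss : 0 ≤ ∑ j ∈ Sᶜ, (1 - ‖w j‖ ^ 2) * ‖⟪w j, v⟫_𝕜‖ ^ 2 := Finset.sum_nonneg fun j _ ↦
    mul_nonneg (sub_nonneg.2 (hw.norm_sq_le_one j)) (sq_nonneg _)
  have hDv := norm_sub_apply_sq_le hD (norm_apply_le_of_isParsevalFrame hw hb hD hDb hbS) v
  have hv := hw.sum_norm_sq_inner v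
  rw [norm_sq_sub_apply_eq_sum hb hD hDb hbS, norm_sq_apply_eq_sum hb hD hDb hbS] at hDv
  refine ⟨b, hb, horth, hle.trans ?_⟩
  simp only [sub_mul, one_mul, Finset.sum_add_distrib, Finset.sum_sub_distrib, ← Finset.mul_sum,
    hA, ← Finset.sum_add_sum_compl S] at hloss hv hS ⊢
  linarith

end Orthogonalization

lemma exists_isStarProjection_sum_norm_sq_sub_apply_le [FiniteDimensional 𝕜 E] [CompleteSpace E]
    {X : Type*} [Fintype X] {A : X → E →L[𝕜] E} (hA : ∀ x, (A x).IsPositive)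
    (hAsum : ∑ x, A x = 1) (v : E) :
    ∃ P : X → E →L[𝕜] E, (∀ x, IsStarProjection (P x)) ∧ ∑ x, P x = 1 ∧
      ∑ x, ‖(A x - P x) v‖ ^ 2 ≤ 9 * (‖v‖ ^ 2 - ∑ x, ‖A x v‖ ^ 2) := by
  classical
  choose w horth hAw using fun x ↦ exists_pairwise_orthogonal_eq_sum_rankOne (hA x)
  let W (p : X × Fin (finrank 𝕜 E)) : E := w p.1 p.2
  have hWf : Pairwise fun p q ↦ p.1 = q.1 → ⟪W p, W q⟫_𝕜 = 0 := by
    rintro ⟨x, i⟩ ⟨y, j⟩ hpq rfl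
    exact horth x fun hij ↦ hpq (congrArg (Prod.mk x) hij)
  have hAW : A = fiberFrameOperator 𝕜 Prod.fst W := by
    ext1 x
    simp only [hAw x, fiberFrameOperator, Finset.sum_filter, Fintype.sum_prod_type]
    rw [Fintype.sum_eq_single x fun y hy ↦ by simp [hy]]
    simp [W]
  have hW : IsParsevalFrame 𝕜 W :=
    (sum_fiberFrameOperator_eq_one_iff (f := Prod.fst)).1 (by rw [← hAW, hAsum])
  obtain ⟨b, hb, hborth, hle⟩ := hW.exists_sum_norm_sq_fiberFrameOperator_sub_le hWf v
  exact ⟨fiberFrameOperator 𝕜 Prod.fst b, isStarProjection_fiberFrameOperator hb hborth,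
    sum_fiberFrameOperator_eq_one_iff.2 hb, by rwa [hAW]⟩

end InnerProductSpace

section Matrix

variable {𝕜 n X : Type*} [RCLike 𝕜] [Fintype n] [DecidableEq n] [Fintype X]

lemma star_dotProduct_mulVec_eq_inner (B : Matrix n n 𝕜) (ψ : n → 𝕜) :
    star ψ ⬝ᵥ (B *ᵥ ψ) =
      ⟪WithLp.toLp 2 ψ, toEuclideanCLM (𝕜 := 𝕜) B (WithLp.toLp 2 ψ)⟫_𝕜 := by
  rw [toEuclideanCLM_toLp, EuclideanSpace.inner_toLp_toLp, dotProduct_comm]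

lemma re_star_dotProduct_sum_mul_self {B : X → Matrix n n 𝕜} (hB : ∀ x, (B x).IsHermitian)
    (ψ : n → 𝕜) : RCLike.re (star ψ ⬝ᵥ ((∑ x, B x * B x) *ᵥ ψ)) =
      ∑ x, ‖toEuclideanCLM (𝕜 := 𝕜) (B x) (WithLp.toLp 2 ψ)‖ ^ 2 := by
  rw [star_dotProduct_mulVec_eq_inner, map_sum, _root_.sum_apply, inner_sum, map_sum]
  refine Finset.sum_congr rfl fun x _ ↦ ?_
  rw [← inner_self_eq_norm_sq (𝕜 := 𝕜), ← ContinuousLinearMap.adjoint_inner_right,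
    ← ContinuousLinearMap.star_eq_adjoint, ← map_star, star_eq_conjTranspose, (hB x).eq, map_mul,
    mul_apply_eq_comp]

theorem orthogonalization_lemma_finiteDim_general {A : X → Matrix n n 𝕜}
    (hA : ∀ x, (A x).PosSemidef) (hAsum : ∑ x, A x = 1) (ψ : n → 𝕜) :
    ∃ P : X → Matrix n n 𝕜, (∀ x, (P x).IsHermitian ∧ P x * P x = P x) ∧ ∑ x, P x = 1 ∧
      RCLike.re (star ψ ⬝ᵥ ((∑ x, (A x - P x) * (A x - P x)) *ᵥ ψ)) ≤
        9 * RCLike.re (star ψ ⬝ᵥ ((1 - ∑ x, A x * A x) *ᵥ ψ)) := by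
  let Φ := toEuclideanCLM (n := n) (𝕜 := 𝕜)
  have hΦA (x : X) : (Φ (A x)).IsPositive := isPositive_toEuclideanLin_iff.2 (hA x)
  obtain ⟨Q, hQ, hQsum, hle⟩ := exists_isStarProjection_sum_norm_sq_sub_apply_le hΦA
    (by rw [← map_sum, hAsum, map_one]) (WithLp.toLp 2 ψ)
  have hP (x : X) : IsStarProjection (Φ.symm (Q x)) := (hQ x).map Φ.symm
  refine ⟨fun x ↦ Φ.symm (Q x), fun x ↦ ⟨(hP x).isSelfAdjoint, (hP x).isIdempotentElem⟩,
    by rw [← map_sum, hQsum, map_one], ?_⟩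
  rw [re_star_dotProduct_sum_mul_self fun x ↦ (hA x).1.sub (hP x).isSelfAdjoint, sub_mulVec,
    dotProduct_sub, map_sub, re_star_dotProduct_sum_mul_self fun x ↦ (hA x).1,
    star_dotProduct_mulVec_eq_inner, map_one, one_apply_eq_self, inner_self_eq_norm_sq]
  simpa only [Φ, map_sub, StarAlgEquiv.apply_symm_apply] using hle

end Matrix

/-- Orthogonalization lemma, finite-dimensional case: if a POVM
`{A_x}` on `ℂⁿ` satisfies `Σ_x ⟨ψ, A_x² ψ⟩ > 1 − ε` for a unit vector `ψ`, then
there is a PVM `{P_x}` with `Σ_x ⟨ψ, (A_x − P_x)² ψ⟩ < 9ε`. -/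
theorem orthogonalization_lemma_finiteDim {n : ℕ} {X : Type*} [Fintype X]
    (ψ : Fin n → ℂ) (hψ : star ψ ⬝ᵥ ψ = 1) (ε : ℝ)
    (A : X → Matrix (Fin n) (Fin n) ℂ)
    (hA : ∀ x, (A x).PosSemidef) (hAsum : ∑ x, A x = 1)
    (h : 1 - ε < (star ψ ⬝ᵥ ((∑ x, A x * A x) *ᵥ ψ)).re) :
    ∃ P : X → Matrix (Fin n) (Fin n) ℂ,
      (∀ x, (P x).IsHermitian ∧ P x * P x = P x) ∧ (∑ x, P x = 1) ∧
      (star ψ ⬝ᵥ ((∑ x, (A x - P x) * (A x - P x)) *ᵥ ψ)).re < 9 * ε := by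
  obtain ⟨P, hP, hPsum, hle⟩ := orthogonalization_lemma_finiteDim_general hA hAsum ψ
  rw [sub_mulVec, one_mulVec, dotProduct_sub, hψ, map_sub, RCLike.one_re] at hle
  exact ⟨P, hP, hPsum, hle.trans_lt (mul_lt_mul_of_pos_left (sub_lt_comm.1 h) (by norm_num))⟩
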